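/- Let G be a simple graph on a finite vertex set V with N = |V| vertices and adjacency matrix A (so A_{ij} = 1 if i and j are adjacent and 0 otherwise). Then for every η : V → ℝ and every x : V → {−1, 1}, the cut value Σ_{{i,j} ∈ E(G)} (1 − x_i x_j)/2 is at most |E(G)|/2 + Σ_{i ∈ V} η_i − N·λ_min((1/4)A + diag(η)), where diag(η) is the diagonal matrix with diagonal entries η_i. -/

import Mathlib

open Matrix BigOperators

/-- Least eigenvalue of a real symmetric (Hermitian) matrix (junk value `0` otherwise). -/
noncomputable def lambdaMin {V : Type*} [Fintype V] [DecidableEq V] (M : Matrix V V ℝ) : ℝ :=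
  if h : M.IsHermitian then ⨅ i, h.eigenvalues i else 0

/-- The cut value `Σ_{{i,j} ∈ E(G)} (1 - x_i x_j)/2` of an assignment `x`. -/
noncomputable def cutValue {V : Type*} [Fintype V] [DecidableEq V]
    (G : SimpleGraph V) [DecidableRel G.Adj] (x : V → ℝ) : ℝ :=
  ∑ e ∈ G.edgeFinset, Sym2.lift ⟨fun i j => (1 - x i * x j) / 2, fun i j => by ring⟩ e

/-! Every edge `{i, j}` contributes `(1 - x i * x j) / 2` to the cut and twice `x i * x j` to the
quadratic form of the adjacency matrix `A`, so the cut value is `|E| / 2 - xᵀ (A / 4) x`. Adding and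
subtracting `xᵀ diag(η) x`, which is `∑ i, η i` on sign vectors, leaves the quadratic form of
`A / 4 + diag(η)`, and this is at least `λ_min * |x|²`, where `|x|² = N` on sign vectors. -/

section Graph

variable {V : Type*} [Fintype V] (G : SimpleGraph V) [DecidableRel G.Adj]

theorem sum_dart_edge {M : Type*} [AddCommMonoid M] [Fintype G.edgeSet] (f : Sym2 V → M) :
    ∑ d : G.Dart, f d.edge = 2 • ∑ e ∈ G.edgeFinset, f e := by
  classical
  have edge_mem (d : G.Dart) : d.edge ∈ G.edgeFinset := SimpleGraph.mem_edgeFinset.2 d.edge_mem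
  rw [← Finset.sum_fiberwise_of_maps_to' fun d _ => edge_mem d, Finset.smul_sum]
  refine Finset.sum_congr rfl fun e he => ?_
  rw [Finset.sum_const, G.dart_edge_fiber_card e (SimpleGraph.mem_edgeFinset.1 he)]

theorem sum_dart_toProd {M : Type*} [AddCommMonoid M] (f : V × V → M) :
    ∑ d : G.Dart, f d.toProd = ∑ i, ∑ j, if G.Adj i j then f (i, j) else 0 := by
  rw [← Fintype.sum_prod_type', ← Finset.sum_filter]
  exact Finset.sum_bij' (fun d _ => d.toProd) (fun p hp => ⟨p, (Finset.mem_filter.1 hp).2⟩)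
    (by simp) (by simp) (by simp) (by simp) (fun _ _ => rfl)

theorem dotProduct_adjMatrix_mulVec_self {α : Type*} [CommSemiring α] [Fintype G.edgeSet]
    (x : V → α) :
    x ⬝ᵥ G.adjMatrix α *ᵥ x = 2 * ∑ e ∈ G.edgeFinset, (e.map x).mul :=
  calc
    x ⬝ᵥ G.adjMatrix α *ᵥ x = ∑ d : G.Dart, (d.edge.map x).mul := by
      rw [SimpleGraph.dotProduct_mulVec_adjMatrix]
      exact (sum_dart_toProd G fun p => x p.1 * x p.2).symm
    _ = 2 * ∑ e ∈ G.edgeFinset, (e.map x).mul := by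
      rw [sum_dart_edge G fun e => (e.map x).mul, two_nsmul, two_mul]

theorem cutValue_eq_sub_dotProduct_adjMatrix_mulVec [DecidableEq V] (x : V → ℝ) :
    cutValue G x = (G.edgeFinset.card : ℝ) / 2 - 1 / 4 * (x ⬝ᵥ G.adjMatrix ℝ *ᵥ x) := by
  have cutValue_eq_sum : cutValue G x = ∑ e ∈ G.edgeFinset, (1 - (e.map x).mul) / 2 :=
    Finset.sum_congr rfl fun e _ => e.ind fun _ _ => rfl
  rw [cutValue_eq_sum, dotProduct_adjMatrix_mulVec_self, ← Finset.sum_div,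
    Finset.sum_sub_distrib, Finset.sum_const, nsmul_one]
  ring

end Graph

section Spectral

variable {n : Type*} [Fintype n] [DecidableEq n]

open scoped MatrixOrder ComplexOrder in
theorem posSemidef_sub_algebraMap_iff_le_eigenvalues {𝕜 : Type*} [RCLike 𝕜] {M : Matrix n n 𝕜}
    (hM : M.IsHermitian) {c : ℝ} :
    (M - algebraMap ℝ (Matrix n n 𝕜) c).PosSemidef ↔ ∀ i, c ≤ hM.eigenvalues i := by
  rw [← Matrix.le_iff, algebraMap_le_iff_le_spectrum hM.isSelfAdjoint,
    hM.spectrum_real_eq_range_eigenvalues, Set.forall_mem_range]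

open scoped ComplexOrder in
theorem smul_dotProduct_le_of_le_eigenvalues {𝕜 : Type*} [RCLike 𝕜] {M : Matrix n n 𝕜}
    (hM : M.IsHermitian) {c : ℝ} (hc : ∀ i, c ≤ hM.eigenvalues i) (x : n → 𝕜) :
    c • (star x ⬝ᵥ x) ≤ star x ⬝ᵥ M *ᵥ x := by
  have hpsd := (posSemidef_sub_algebraMap_iff_le_eigenvalues hM).2 hc
  have hnonneg := hpsd.dotProduct_mulVec_nonneg x
  rwa [Algebra.algebraMap_eq_smul_one, sub_mulVec, smul_mulVec, one_mulVec, dotProduct_sub,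
    dotProduct_smul, sub_nonneg] at hnonneg

theorem lambdaMin_le_eigenvalues {M : Matrix n n ℝ} (hM : M.IsHermitian) (i : n) :
    lambdaMin M ≤ hM.eigenvalues i := by
  rw [lambdaMin, dif_pos hM]
  exact ciInf_le (Set.finite_range _).bddBelow i

theorem lambdaMin_mul_dotProduct_self_le {M : Matrix n n ℝ} (hM : M.IsHermitian) (x : n → ℝ) :
    lambdaMin M * (x ⬝ᵥ x) ≤ x ⬝ᵥ M *ᵥ x := by
  simpa using smul_dotProduct_le_of_le_eigenvalues hM (lambdaMin_le_eigenvalues hM) x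

end Spectral

theorem maxcut_dual_certificate_general {V : Type*} [Fintype V] [DecidableEq V]
    (G : SimpleGraph V) [DecidableRel G.Adj] (η x : V → ℝ) :
    cutValue G x ≤
      (G.edgeFinset.card : ℝ) / 2 + ∑ i, η i * x i ^ 2
        - (∑ i, x i ^ 2) * lambdaMin ((1 / 4 : ℝ) • G.adjMatrix ℝ + diagonal η) := by
  have hM : ((1 / 4 : ℝ) • G.adjMatrix ℝ + diagonal η).IsHermitian :=
    ((G.isHermitian_adjMatrix ℝ).smul (.all _)).add (isHermitian_diagonal η)
  have hnorm : x ⬝ᵥ x = ∑ i, x i ^ 2 := by simp only [dotProduct, sq]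
  have hdiag : x ⬝ᵥ diagonal η *ᵥ x = ∑ i, η i * x i ^ 2 := by
    simp only [dotProduct, mulVec_diagonal, sq, mul_left_comm]
  have hrayleigh := lambdaMin_mul_dotProduct_self_le hM x
  rw [hnorm, add_mulVec, smul_mulVec, dotProduct_add, dotProduct_smul, smul_eq_mul, hdiag]
    at hrayleigh
  rw [cutValue_eq_sub_dotProduct_adjMatrix_mulVec]
  linarith

/-- the spectral dual certificate bounds every cut of `G`. -/
theorem maxcut_dual_certificate {V : Type*} [Fintype V] [DecidableEq V]
    (G : SimpleGraph V) [DecidableRel G.Adj]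
    (η : V → ℝ) (x : V → ℝ) (hx : ∀ i, x i = 1 ∨ x i = -1) :
    cutValue G x ≤
      (G.edgeFinset.card : ℝ) / 2 + ∑ i, η i
        - (Fintype.card V : ℝ) *
            lambdaMin ((1 / 4 : ℝ) • G.adjMatrix ℝ + Matrix.diagonal η) := by
  have hsq (i : V) : x i ^ 2 = 1 := sq_eq_one_iff.2 (hx i)
  simpa [hsq] using maxcut_dual_certificate_general G η x
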